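/- arXiv:2410.14434 — 2 statements merged into one kernel-verified Lean document; each statement's English description precedes it below -/
import Mathlib

section
/- Let n ≥ 2 be an even integer and let a, b be positive integers with 2a² = n(n+1)b². Set a' = (n/2)·(2a − (n+1)b) and b' = nb − a. Then a' and b' are positive integers satisfying 2a'² = n(n+1)b'². (This is the descent step for even n in the triangular-number construction.) -/
/-! Write `n = 2m` with `m ≥ 1`, so that `a² = m(2m+1)b²`. Positivity of `a'` and `b'` amounts to
`(2m+1)b < 2a` and `a < 2mb`; after squaring and substituting for `a²` both reduce to `1 < 2m`.
The last equation is a multiple of the hypothesis, since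
`a'² - m(2m+1)b'² = m(2m-1)(a² - m(2m+1)b²)`. -/

theorem triangular_descent_even (n a b : ℤ) (hn : 2 ≤ n) (heven : Even n)
    (ha : 0 < a) (hb : 0 < b) (h : 2 * a ^ 2 = n * (n + 1) * b ^ 2) :
    0 < (n / 2) * (2 * a - (n + 1) * b) ∧ 0 < n * b - a ∧
      2 * ((n / 2) * (2 * a - (n + 1) * b)) ^ 2 = n * (n + 1) * (n * b - a) ^ 2 := by
  obtain ⟨m, rfl⟩ := heven
  have hm : 1 ≤ m := by omega
  have hdiv : (m + m) / 2 = m := by omega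
  rw [hdiv]
  have h' : a ^ 2 = m * (2 * m + 1) * b ^ 2 := by linarith
  have hb2 : 0 < b ^ 2 := by positivity
  have h2m : 0 < 2 * m - 1 := by omega
  have hlower : (m + m + 1) * b < 2 * a := by
    refine lt_of_pow_lt_pow_left₀ 2 (by positivity) ?_
    have : 0 < (2 * m + 1) * (2 * m - 1) * b ^ 2 := by positivity
    linarith
  have hupper : a < (m + m) * b := by
    refine lt_of_pow_lt_pow_left₀ 2 (by positivity) ?_
    have : 0 < m * (2 * m - 1) * b ^ 2 := by positivity
    linarith
  refine ⟨mul_pos (by omega) (by linarith), by linarith, ?_⟩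
  linear_combination 2 * m * (2 * m - 1) * h'
end

section
/- Let n ≥ 3 be an odd integer and let a, b be positive integers with 2a² = n(n+1)b². Set a' = ((n+1)/2)·(nb − a) and b' = a − ((n+1)/2)·b. Then a' and b' are positive integers satisfying 2a'² = n(n+1)b'². (This is the descent step for odd n in the triangular-number construction.) -/
/-!
Put `n = 2k + 1` and `m = (n + 1) / 2 = k + 1`, so that the hypothesis reads `a² = n m b²`. Since
`n ≥ 3` gives `m < n`, we get `m² b² < a² < n² b²`, i.e. `m b < a < n b`; this is the positivity.
For the equation, `m (n b - a)² - n (a - m b)² = (m - n) (a² - n m b²) = 0`; multiply by `2m`.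
-/

theorem triangular_descent_odd (n a b : ℤ) (hn : 3 ≤ n) (hodd : Odd n)
    (ha : 0 < a) (hb : 0 < b) (h : 2 * a ^ 2 = n * (n + 1) * b ^ 2) :
    0 < ((n + 1) / 2) * (n * b - a) ∧ 0 < a - ((n + 1) / 2) * b ∧
      2 * (((n + 1) / 2) * (n * b - a)) ^ 2 = n * (n + 1) * (a - ((n + 1) / 2) * b) ^ 2 := by
  obtain ⟨k, rfl⟩ := hodd
  have hm : (2 * k + 1 + 1) / 2 = k + 1 := by omega
  rw [hm]
  have hk : 1 ≤ k := by omega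
  have h' : a ^ 2 = (2 * k + 1) * (k + 1) * b ^ 2 := by linarith
  have hb2 : 0 < b ^ 2 := by positivity
  have h1 : a < (2 * k + 1) * b := by
    refine lt_of_pow_lt_pow_left₀ 2 (by positivity) ?_
    have : 0 < (2 * k + 1) * k * b ^ 2 := by positivity
    linarith
  have h2 : (k + 1) * b < a := by
    refine lt_of_pow_lt_pow_left₀ 2 ha.le ?_
    have : 0 < (k + 1) * k * b ^ 2 := by positivity
    linarith
  refine ⟨mul_pos (by omega) (sub_pos.2 h1), sub_pos.2 h2, ?_⟩
  linear_combination 2 * (k + 1) * ((k + 1) - (2 * k + 1)) * h'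
end
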